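/- Define g_i = (J_i')⁻¹ : ℝ → (u̲_i, ū_i) (the inverse of the strictly increasing bijection J_i' : (u̲_i, ū_i) → ℝ), and define F : ℝ^m → ℝ^m by F(η) = −(1/β) 𝟙 (Σ_{i=1}^m g_i(η_i) − d) − L η. Then there exists a unique η̄ ∈ span(𝟙) with F(η̄) = 0, and there exists a continuously differentiable function 𝒱 : ℝ^m → ℝ such that 𝒱(η̄) = 0, 𝒱(η) > 0 for all η ≠ η̄, 𝒱(η) → +∞ as ‖η‖₂ → ∞, and ∇𝒱(η)ᵀ F(η) < 0 for every η ≠ η̄. (Existence of a strict, radially unbounded Lyapunov function for the reduced DAPI dynamics η̇ = −Δω̄(u) − Lη, u = ∇J*(η); the core of the proof of the paper's Theorem 1.) -/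

import Mathlib

open Filter Matrix Polynomial

theorem young_cplx (c : ℝ) (hc : 0 < c) (a b : ℂ) :
    -(c/2) * Complex.normSq a - (1/(2*c)) * Complex.normSq b ≤ (star a * b).re := by
  have h : 0 ≤ (1/(2*c)) * ((c * a.re + b.re)^2 + (c * a.im + b.im)^2) := by positivity
  have e : (1/(2*c)) * ((c * a.re + b.re)^2 + (c * a.im + b.im)^2)
    = (star a * b).re + (c/2) * Complex.normSq a + (1/(2*c)) * Complex.normSq b := by
    simp [Complex.normSq_apply]
    field_simp
    ring
  linarith

theorem cplx_lyap (n : ℕ) : ∀ (V : Type) [AddCommGroup V] [Module ℂ V] [FiniteDimensional ℂ V]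
    (T : Module.End ℂ V), Module.finrank ℂ V = n → (∀ z, T.HasEigenvalue z → 0 < z.re) →
    ∃ (k : ℕ) (S : V →ₗ[ℂ] (Fin k → ℂ)) (c : ℝ), 0 < c ∧ Function.Injective S ∧
      ∀ x, c * ∑ i, Complex.normSq (S x i) ≤ ∑ i, (star (S x i) * S (T x) i).re := by
  induction n with
  | zero =>
    intro V _ _ _ T hn _
    have : Subsingleton V := Module.finrank_zero_iff.mp hn
    exact ⟨0, 0, 1, one_pos, fun x y _ => Subsingleton.elim x y, by simp⟩
  | succ n ih =>
    intro V _ _ _ T hn hT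
    have hnt : Nontrivial V := Module.nontrivial_of_finrank_pos (R := ℂ) (by omega)
    obtain ⟨lam, hlam⟩ := Module.End.exists_eigenvalue (K := ℂ) (V := Module.Dual ℂ V) T.dualMap
    obtain ⟨l, hl⟩ := hlam.exists_hasEigenvector
    have hl0 : l ≠ 0 := hl.2
    have hlT : ∀ x, l (T x) = lam * l x := by
      intro x
      have := congrArg (fun f : Module.Dual ℂ V => f x) hl.apply_eq_smul
      simpa using this
    have hre : 0 < lam.re := by
      apply hT
      rw [Module.End.hasEigenvalue_iff]
      intro hbot
      have hinj : Function.Injective (T - lam • (1 : Module.End ℂ V)) := by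
        rw [← LinearMap.ker_eq_bot, ← Module.End.eigenspace_def]; exact hbot
      have hsurj := LinearMap.injective_iff_surjective.mp hinj
      apply hl0
      ext x
      obtain ⟨y, rfl⟩ := hsurj x
      simp [hlT]
    obtain ⟨v, hv⟩ : ∃ v, l v = 1 := by
      obtain ⟨u, hu⟩ : ∃ u, l u ≠ 0 := by
        by_contra! h
        exact hl0 (LinearMap.ext h)
      exact ⟨(l u)⁻¹ • u, by simp [hu]⟩
    let W := LinearMap.ker l
    have hW : ∀ x ∈ W, T x ∈ W := by
      intro x hx
      simp only [W, LinearMap.mem_ker] at hx ⊢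
      simp [hlT, hx]
    have hfW : Module.finrank ℂ W = n := by
      have := Module.Dual.finrank_ker_add_one_of_ne_zero hl0
      simp only [W]; omega
    obtain ⟨k, S, c, hc, hS, hSc⟩ := ih W (T.restrict hW) hfW (by
      intro z hz
      apply hT
      obtain ⟨x, hx⟩ := hz.exists_hasEigenvector
      apply Module.End.hasEigenvalue_of_hasEigenvector (x := (x : V))
      rw [Module.End.hasEigenvector_iff, Module.End.mem_eigenspace_iff]
      refine ⟨?_, by simpa using hx.2⟩
      have := congrArg Subtype.val hx.apply_eq_smul
      simpa using this)
    let π : V →ₗ[ℂ] W := LinearMap.codRestrict W (LinearMap.id - l.smulRight v) (by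
      intro x; simp [W, hv])
    have hπ' : ∀ x, (π x : V) = x - l x • v := fun x => rfl
    have hπ : ∀ x, x = (π x : V) + l x • v := by intro x; rw [hπ']; simp
    have hπT : ∀ x, π (T x) = T.restrict hW (π x) + l x • π (T v) := by
      intro x
      apply Subtype.ext
      rw [Submodule.coe_add, Submodule.coe_smul, LinearMap.coe_restrict_apply, hπ', hπ', hπ', map_sub,
        map_smul, hlT, hlT, hv]
      module
    set B := ∑ i, Complex.normSq (S (π (T v)) i) with hB
    have hB0 : 0 ≤ B := Finset.sum_nonneg fun i _ => Complex.normSq_nonneg _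
    obtain ⟨A, hA0, hA⟩ : ∃ A : ℝ, 0 < A ∧ B / (2 * c) ≤ A^2 * lam.re / 2 := by
      have : 0 < B / c / lam.re + 1 := by positivity
      refine ⟨Real.sqrt (B / c / lam.re + 1), Real.sqrt_pos.2 this, ?_⟩
      rw [Real.sq_sqrt this.le, add_mul, div_mul_cancel₀ _ hre.ne']
      have : B / (2 * c) = B / c / 2 := by field_simp
      rw [this]
      linarith
    let S' : V →ₗ[ℂ] (Fin (k+1) → ℂ) :=
      { toFun := fun x => Fin.cons ((A:ℂ) * l x) (S (π x))
        map_add' := by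
          intro x y; ext i
          refine Fin.cases ?_ (fun i => ?_) i <;> simp [mul_add]
        map_smul' := by
          intro r x; ext i
          refine Fin.cases ?_ (fun i => ?_) i <;> simp; ring }
    have hS'0 : ∀ x, S' x 0 = (A:ℂ) * l x := fun x => rfl
    have hS's : ∀ x i, S' x (Fin.succ i) = S (π x) i := fun x i => rfl
    refine ⟨k+1, S', min (c/2) (lam.re/2), by positivity, ?_, ?_⟩
    · rw [injective_iff_map_eq_zero]
      intro x hx
      have h0 : l x = 0 := by
        have := congrFun hx 0
        rw [hS'0] at this
        simpa [hA0.ne'] using this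
      have h1 : π x = 0 := by
        apply hS
        ext i
        have := congrFun hx i.succ
        rw [hS's] at this
        simpa using this
      rw [hπ x, h0, h1]; simp
    · intro x
      rw [Fin.sum_univ_succ, Fin.sum_univ_succ]
      simp only [hS'0, hS's, hlT]
      set q := ∑ i, Complex.normSq (S (π x) i) with hq
      have hq0 : 0 ≤ q := Finset.sum_nonneg fun i _ => Complex.normSq_nonneg _
      set t := Complex.normSq (l x) with ht
      have ht0 : 0 ≤ t := Complex.normSq_nonneg _
      have e1 : (star ((A:ℂ) * l x) * ((A:ℂ) * (lam * l x))).re = A^2 * lam.re * t := by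
        simp [ht, Complex.normSq_apply]; ring
      have e2 : Complex.normSq ((A:ℂ) * l x) = A^2 * t := by
        simp [ht, sq]
      have e3 : c * q - (c/2) * q - (1/(2*c)) * (t * B) ≤ ∑ i, (star (S (π x) i) * S (π (T x)) i).re := by
        have : ∑ i, (star (S (π x) i) * S (π (T x)) i).re =
          ∑ i, (star (S (π x) i) * S (T.restrict hW (π x)) i).re
            + ∑ i, (star (S (π x) i) * (l x * S (π (T v)) i)).re := by
          rw [← Finset.sum_add_distrib]
          refine Finset.sum_congr rfl fun i _ => ?_
          rw [hπT, map_add, map_smul, ← Complex.add_re]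
          simp only [Pi.add_apply, Pi.smul_apply, smul_eq_mul, mul_add]
        rw [this]
        have h2 : -(c/2) * q - (1/(2*c)) * (t*B) ≤ ∑ i, (star (S (π x) i) * (l x * S (π (T v)) i)).re := by
          rw [hq, hB, Finset.mul_sum, Finset.mul_sum, Finset.mul_sum, ← Finset.sum_sub_distrib]
          refine Finset.sum_le_sum fun i _ => ?_
          have := young_cplx c hc (S (π x) i) (l x * S (π (T v)) i)
          rwa [Complex.normSq_mul] at this
        linarith [hSc (π x)]
      rw [e1, e2]
      have m1 : min (c/2) (lam.re/2) * q ≤ c/2 * q := mul_le_mul_of_nonneg_right (min_le_left _ _) hq0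
      have m2 : min (c/2) (lam.re/2) * (A^2*t) ≤ lam.re/2 * (A^2*t) :=
        mul_le_mul_of_nonneg_right (min_le_right _ _) (by positivity)
      have m3 : B/(2*c)*t ≤ A^2 * lam.re / 2 * t := mul_le_mul_of_nonneg_right hA ht0
      have m4 : (1/(2*c)) * (t * B) = B/(2*c)*t := by ring
      rw [mul_add]
      linarith

/-- real version -/
theorem real_lyap {m : ℕ} (M : Matrix (Fin m) (Fin m) ℝ)
    (hM : ∀ (z : ℂ) (x : Fin m → ℂ), x ≠ 0 → (M.map Complex.ofReal) *ᵥ x = z • x → 0 < z.re) :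
    ∃ (k : ℕ) (U : (Fin m → ℝ) →ₗ[ℝ] (Fin k ⊕ Fin k → ℝ)) (c : ℝ), 0 < c ∧ Function.Injective U ∧
      ∀ x, c * ∑ i, (U x i)^2 ≤ ∑ i, U x i * U (M *ᵥ x) i := by
  obtain ⟨k, S, c, hc, hS, hSc⟩ := cplx_lyap _ (Fin m → ℂ) (Matrix.toLin' (M.map Complex.ofReal)) rfl (by
    intro z hz
    obtain ⟨x, hx⟩ := hz.exists_hasEigenvector
    exact hM z x hx.2 (by simpa using hx.apply_eq_smul))
  let U : (Fin m → ℝ) →ₗ[ℝ] (Fin k ⊕ Fin k → ℝ) :=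
    { toFun := fun x => Sum.elim (fun i => (S (fun j => (x j : ℂ)) i).re)
        (fun i => (S (fun j => (x j : ℂ)) i).im)
      map_add' := by
        intro x y
        have : (fun j => (((x + y) j : ℝ) : ℂ)) = (fun j => (x j : ℂ)) + (fun j => (y j : ℂ)) := by
          ext j; simp
        ext i
        rcases i with i | i <;> simp only [this, map_add] <;> simp
      map_smul' := by
        intro r x
        have : (fun j => (((r • x) j : ℝ) : ℂ)) = (r:ℂ) • (fun j => (x j : ℂ)) := by
          ext j; simp
        ext i
        rcases i with i | i <;> simp only [this, map_smul] <;> simp }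
  have hUl : ∀ x i, U x (Sum.inl i) = (S (fun j => (x j : ℂ)) i).re := fun _ _ => rfl
  have hUr : ∀ x i, U x (Sum.inr i) = (S (fun j => (x j : ℂ)) i).im := fun _ _ => rfl
  refine ⟨k, U, c, hc, ?_, ?_⟩
  · rw [injective_iff_map_eq_zero]
    intro x hx
    have : S (fun j => (x j : ℂ)) = S 0 := by
      ext i
      apply Complex.ext
      · rw [← hUl, hx]; simp
      · rw [← hUr, hx]; simp
    have := hS this
    ext j
    have := congrFun this j
    simpa using this
  · intro x
    have := hSc (fun j => (x j : ℂ))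
    have e : (Matrix.toLin' (M.map Complex.ofReal)) (fun j => (x j : ℂ)) = fun j => ((M *ᵥ x) j : ℂ) := by
      ext j
      simp [Matrix.mulVec, dotProduct]
    rw [e] at this
    rw [Fintype.sum_sum_type, Fintype.sum_sum_type, ← Finset.sum_add_distrib, ← Finset.sum_add_distrib]
    simp only [hUl, hUr]
    convert this using 3
    · rw [Complex.normSq_apply]; ring
    · simp

theorem left_null {m : ℕ} (L : Matrix (Fin m) (Fin m) ℝ) (hm : 0 < m)
    (hL1 : L.mulVec (fun _ => (1 : ℝ)) = 0)
    (hsimple : ((L.map (Complex.ofReal)).charpoly).rootMultiplicity 0 = 1) :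
    (∀ x, L *ᵥ x = 0 → ∃ c : ℝ, x = fun _ => c) ∧
    ∃ w : Fin m → ℝ, w ᵥ* L = 0 ∧ ∑ i, w i = 1 := by
  have hs : L.charpoly.rootMultiplicity 0 = 1 := by
    rw [Polynomial.eq_rootMultiplicity_map (f := Complex.ofRealHom) Complex.ofReal_injective,
      ← Matrix.charpoly_map, map_zero]
    exact hsimple
  have hone : (fun _ : Fin m => (1:ℝ)) ≠ 0 := fun h => one_ne_zero (congrFun h ⟨0, hm⟩)
  have key : ∀ x, L *ᵥ (L *ᵥ x) = 0 → ∃ c : ℝ, x = fun _ => c := by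
    intro x hx
    have hle := LinearMap.finrank_genEigenspace_le (Matrix.toLin' L) 0 2
    rw [Matrix.charpoly_toLin', hs] at hle
    have h1 : (fun _ : Fin m => (1:ℝ)) ∈ Module.End.genEigenspace (Matrix.toLin' L) 0 2 := by
      rw [show (2:ℕ∞) = ((2:ℕ):ℕ∞) from rfl, Module.End.mem_genEigenspace_nat]
      simp [pow_two, hL1]
    have hx' : x ∈ Module.End.genEigenspace (Matrix.toLin' L) 0 2 := by
      rw [show (2:ℕ∞) = ((2:ℕ):ℕ∞) from rfl, Module.End.mem_genEigenspace_nat]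
      simp [pow_two, hx]
    have hfr : Module.finrank ℝ (Module.End.genEigenspace (Matrix.toLin' L) 0 2) = 1 := by
      apply le_antisymm hle
      have : Nontrivial (Module.End.genEigenspace (Matrix.toLin' L) 0 2) :=
        ⟨⟨⟨_, h1⟩, 0, fun h => hone (congrArg Subtype.val h)⟩⟩
      exact Module.finrank_pos
    obtain ⟨c, hc⟩ := exists_smul_eq_of_finrank_eq_one hfr (x := ⟨_, h1⟩)
      (fun h => hone (congrArg Subtype.val h)) ⟨x, hx'⟩
    refine ⟨c, ?_⟩
    have := congrArg Subtype.val hc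
    ext j
    have := congrFun this j
    simpa using this.symm
  have hker : ∀ x, L *ᵥ x = 0 → ∃ c : ℝ, x = fun _ => c := fun x hx => key x (by rw [hx]; simp)
  refine ⟨hker, ?_⟩
  have hdet : L.det = 0 := Matrix.exists_mulVec_eq_zero_iff.mp ⟨_, hone, hL1⟩
  obtain ⟨w, hw0, hw⟩ := Matrix.exists_vecMul_eq_zero_iff.mpr hdet
  have hsum : ∑ i, w i ≠ 0 := by
    intro h0
    let l : Module.Dual ℝ (Fin m → ℝ) := dotProductBilin ℝ ℝ w
    have hl : ∀ x, l x = w ⬝ᵥ x := fun x => rfl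
    have hl0 : l ≠ 0 := by
      intro h
      apply hw0
      have := hl w
      rw [h] at this
      exact dotProduct_self_eq_zero.mp this.symm
    have hsub : LinearMap.range (Matrix.toLin' L) ≤ LinearMap.ker l := by
      rintro _ ⟨x, rfl⟩
      rw [LinearMap.mem_ker, hl, Matrix.toLin'_apply, Matrix.dotProduct_mulVec, hw, zero_dotProduct]
    have d1 := Module.Dual.finrank_ker_add_one_of_ne_zero hl0
    have d2 := LinearMap.finrank_range_add_finrank_ker (Matrix.toLin' L)
    have d3 : Module.finrank ℝ (LinearMap.ker (Matrix.toLin' L)) ≤ 1 := by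
      apply finrank_le_one (⟨fun _ => 1, by simpa using hL1⟩ : LinearMap.ker (Matrix.toLin' L))
      rintro ⟨x, hx⟩
      obtain ⟨c, rfl⟩ := hker x (by simpa using hx)
      refine ⟨c, ?_⟩
      apply Subtype.ext
      ext j
      simp
    have heq := Submodule.eq_of_le_of_finrank_le hsub (by omega)
    have hmem : (fun _ : Fin m => (1:ℝ)) ∈ LinearMap.ker l := by
      rw [LinearMap.mem_ker, hl]; simpa [dotProduct] using h0
    rw [← heq] at hmem
    obtain ⟨v, hv⟩ := hmem
    rw [Matrix.toLin'_apply] at hv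
    obtain ⟨c, rfl⟩ := key v (by rw [hv, hL1])
    apply hone
    rw [← hv]
    have : (fun _ : Fin m => c) = c • (fun _ => (1:ℝ)) := by ext; simp
    rw [this, Matrix.mulVec_smul, hL1, smul_zero]
  refine ⟨(∑ i, w i)⁻¹ • w, ?_, ?_⟩
  · rw [Matrix.smul_vecMul, hw, smul_zero]
  · simp [← Finset.mul_sum, hsum]

/-- Lyapunov form adapted to the consensus dynamics. -/
theorem consensus_lyap {m : ℕ} (L : Matrix (Fin m) (Fin m) ℝ) (hm : 0 < m)
    (hL1 : L.mulVec (fun _ => (1 : ℝ)) = 0)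
    (hsimple : ((L.map (Complex.ofReal)).charpoly).rootMultiplicity 0 = 1)
    (hspec : ∀ z : ℂ, ((L.map (Complex.ofReal)).charpoly).IsRoot z → z ≠ 0 → 0 < z.re) :
    ∃ w : Fin m → ℝ, w ᵥ* L = 0 ∧ ∑ i, w i = 1 ∧
    ∃ (k : ℕ) (U : (Fin m → ℝ) →ₗ[ℝ] (Fin k ⊕ Fin k → ℝ)) (c : ℝ), 0 < c ∧ Function.Injective U ∧
      ∀ x, w ⬝ᵥ x = 0 → c * ∑ i, (U x i)^2 ≤ ∑ i, U x i * U (L *ᵥ x) i := by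
  obtain ⟨hker, w, hw, hw1⟩ := left_null L hm hL1 hsimple
  refine ⟨w, hw, hw1, ?_⟩
  obtain ⟨k, U, c, hc, hU, hUc⟩ := real_lyap (L + Matrix.of fun _ j => w j) (by
    intro z x hx hz
    set Lc := L.map Complex.ofReal with hLc
    set s : ℂ := ∑ j, (w j : ℂ) * x j with hs
    have h1 : ∀ i, (Lc *ᵥ x) i + s = z * x i := by
      intro i
      have := congrFun hz i
      rw [Pi.smul_apply, smul_eq_mul] at this
      rw [← this, hs]
      simp [hLc, Matrix.mulVec, dotProduct, add_mul, Finset.sum_add_distrib]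
    have hwc : ∀ j, ∑ i, (w i : ℂ) * Lc i j = 0 := by
      intro j
      have := congrFun hw j
      simp only [Matrix.vecMul, dotProduct, Pi.zero_apply] at this
      have := congrArg Complex.ofReal this
      simpa [hLc] using this
    have hw1c : ∑ i, (w i : ℂ) = 1 := by exact_mod_cast hw1
    have h2 : s = z * s := by
      have : ∑ i, (w i : ℂ) * ((Lc *ᵥ x) i + s) = ∑ i, (w i : ℂ) * (z * x i) :=
        Finset.sum_congr rfl fun i _ => by rw [h1]
      simp only [mul_add, Finset.sum_add_distrib, ← Finset.sum_mul, hw1c, one_mul] at this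
      have e : ∑ i, (w i : ℂ) * (Lc *ᵥ x) i = 0 := by
        simp only [Matrix.mulVec, dotProduct, Finset.mul_sum]
        rw [Finset.sum_comm]
        apply Finset.sum_eq_zero
        intro j _
        simp only [← mul_assoc]
        rw [← Finset.sum_mul, hwc, zero_mul]
      rw [e, zero_add] at this
      refine this.trans ?_
      rw [hs, Finset.mul_sum]
      exact Finset.sum_congr rfl fun i _ => by ring
    by_cases hs0 : s = 0
    · have h3 : Lc *ᵥ x = z • x := by
        ext i; have := h1 i; simpa [hs0] using this
      apply hspec z
      · rw [← Matrix.charpoly_toLin', ← Module.End.hasEigenvalue_iff_isRoot_charpoly]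
        apply Module.End.hasEigenvalue_of_hasEigenvector (x := x)
        rw [Module.End.hasEigenvector_iff, Module.End.mem_eigenspace_iff]
        exact ⟨by simpa using h3, hx⟩
      · rintro rfl
        have hL0 : ∀ i, ∑ j, (L i j : ℂ) * x j = 0 := by
          intro i; have := congrFun h3 i; simpa [hLc, Matrix.mulVec, dotProduct] using this
        obtain ⟨a, ha⟩ := hker (fun j => (x j).re) (by
          ext i; have := congrArg Complex.re (hL0 i); simpa [Matrix.mulVec, dotProduct] using this)
        obtain ⟨b, hb⟩ := hker (fun j => (x j).im) (by
          ext i; have := congrArg Complex.im (hL0 i); simpa [Matrix.mulVec, dotProduct] using this)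
        have hxc : ∀ j, x j = ⟨a, b⟩ := fun j => Complex.ext (congrFun ha j) (congrFun hb j)
        apply hx
        have : s = ⟨a, b⟩ := by
          rw [hs]; simp only [hxc, ← Finset.sum_mul, hw1c, one_mul]
        ext1 j
        rw [hxc, ← this, hs0]; rfl
    · have : z = 1 := by
        have := mul_right_cancel₀ hs0 ((one_mul s).trans h2)
        exact this.symm
      simp [this])
  refine ⟨k, U, c, hc, hU, fun x hx => ?_⟩
  have := hUc x
  have e : (L + Matrix.of fun _ j => w j) *ᵥ x = L *ᵥ x := by
    rw [Matrix.add_mulVec]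
    ext i
    simpa [Matrix.mulVec] using hx
  rwa [e] at this

theorem tendsto_sum_hi {ι : Type} (s : Finset ι) (f : ι → ℝ → ℝ) (a : ι → EReal) (l : Filter ℝ)
    (h : ∀ i, Tendsto (fun p => (f i p : EReal)) l (nhds (a i))) (ha : ∀ i, a i ≠ ⊥) :
    (∑ i ∈ s, a i) ≠ ⊥ ∧ Tendsto (fun p => ((∑ i ∈ s, f i p : ℝ) : EReal)) l (nhds (∑ i ∈ s, a i)) := by
  classical
  induction s using Finset.induction_on with
  | empty => simpa using tendsto_const_nhds
  | insert i s hi ih =>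
    simp only [Finset.sum_insert hi]
    refine ⟨?_, ?_⟩
    · rw [Ne, EReal.add_eq_bot_iff]; push Not; exact ⟨ha i, ih.1⟩
    · have := (EReal.continuousAt_add (p := (a i, ∑ i ∈ s, a i)) (Or.inr ih.1) (Or.inl (ha i))).tendsto.comp
        ((h i).prodMk_nhds ih.2)
      simpa [Function.comp_def] using this

theorem tendsto_sum_lo {ι : Type} (s : Finset ι) (f : ι → ℝ → ℝ) (a : ι → EReal) (l : Filter ℝ)
    (h : ∀ i, Tendsto (fun p => (f i p : EReal)) l (nhds (a i))) (ha : ∀ i, a i ≠ ⊤) :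
    (∑ i ∈ s, a i) ≠ ⊤ ∧ Tendsto (fun p => ((∑ i ∈ s, f i p : ℝ) : EReal)) l (nhds (∑ i ∈ s, a i)) := by
  classical
  induction s using Finset.induction_on with
  | empty => simpa using tendsto_const_nhds
  | insert i s hi ih =>
    simp only [Finset.sum_insert hi]
    refine ⟨?_, ?_⟩
    · exact EReal.add_ne_top (ha i) ih.1
    · have := (EReal.continuousAt_add (p := (a i, ∑ i ∈ s, a i)) (Or.inl (ha i)) (Or.inr ih.1)).tendsto.comp
        ((h i).prodMk_nhds ih.2)
      simpa [Function.comp_def] using this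

/-- tangent inequality for the primitive of a monotone continuous function -/
theorem prim_tangent (h : ℝ → ℝ) (hc : Continuous h) (hmono : Monotone h) (s0 s t : ℝ) :
    (∫ x in s0..t, h x) + h t * (s - t) ≤ ∫ x in s0..s, h x := by
  have hadd := intervalIntegral.integral_add_adjacent_intervals
    (hc.intervalIntegrable (μ := MeasureTheory.volume) s0 t)
    (hc.intervalIntegrable (μ := MeasureTheory.volume) t s)
  rw [← hadd]
  have : h t * (s - t) ≤ ∫ x in t..s, h x := by
    rcases le_total t s with hts | hts
    · have := intervalIntegral.integral_mono_on (μ := MeasureTheory.volume) hts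
        (intervalIntegrable_const (c := h t)) (hc.intervalIntegrable t s)
        (fun x hx => hmono hx.1)
      rw [intervalIntegral.integral_const, smul_eq_mul] at this
      linarith
    · have := intervalIntegral.integral_mono_on (μ := MeasureTheory.volume) hts
        (hc.intervalIntegrable s t) (intervalIntegrable_const (c := h t))
        (fun x hx => hmono hx.2)
      rw [intervalIntegral.integral_const, smul_eq_mul] at this
      rw [intervalIntegral.integral_symm]
      linarith
  linarith

/-- Core of the paper's Theorem 1: the reduced DAPI dynamics
`F(η) = −(1/β)𝟙(Σᵢ gᵢ(ηᵢ) − d) − Lη`, with `gᵢ = (Jᵢ')⁻¹`, have a unique equilibrium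
`η̄ ∈ span 𝟙`, and there is a strict, radially unbounded Lyapunov function for it. -/
theorem dapi_reduced_dynamics_lyapunov
    (m : ℕ) (hm : 2 ≤ m)
    (lo hi : Fin m → EReal) (hlohi : ∀ i, lo i < hi i)
    (J J' : Fin m → ℝ → ℝ) (μ : Fin m → ℝ) (hμ : ∀ i, 0 < μ i)
    (hderiv : ∀ i, ∀ x : ℝ, lo i < (x : EReal) → (x : EReal) < hi i →
      HasDerivAt (J i) (J' i x) x)
    (hJ'cont : ∀ i, ContinuousOn (J' i) {x : ℝ | lo i < (x : EReal) ∧ (x : EReal) < hi i})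
    (hconv : ∀ i, ∀ x y : ℝ, lo i < (x : EReal) → (x : EReal) < hi i →
      lo i < (y : EReal) → (y : EReal) < hi i →
      μ i * (x - y) ^ 2 ≤ (J' i x - J' i y) * (x - y))
    (hbarrier_lo : ∀ i, ∀ a : ℝ, lo i = (a : EReal) →
      Tendsto (J i) (nhdsWithin a (Set.Ioi a)) atTop)
    (hbarrier_hi : ∀ i, ∀ b : ℝ, hi i = (b : EReal) →
      Tendsto (J i) (nhdsWithin b (Set.Iio b)) atTop)
    (d : ℝ)
    (hfeas_lo : ∑ i, lo i < (d : EReal)) (hfeas_hi : (d : EReal) < ∑ i, hi i)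
    (g : Fin m → ℝ → ℝ)
    (hg_mem : ∀ i, ∀ p : ℝ, lo i < (g i p : EReal) ∧ (g i p : EReal) < hi i)
    (hg_right : ∀ i, ∀ p : ℝ, J' i (g i p) = p)
    (hg_left : ∀ i, ∀ x : ℝ, lo i < (x : EReal) → (x : EReal) < hi i → g i (J' i x) = x)
    (L : Matrix (Fin m) (Fin m) ℝ)
    (hL1 : L.mulVec (fun _ => (1 : ℝ)) = 0)
    (hsimple : ((L.map (Complex.ofReal)).charpoly).rootMultiplicity 0 = 1)
    (hspec : ∀ z : ℂ, ((L.map (Complex.ofReal)).charpoly).IsRoot z → z ≠ 0 → 0 < z.re)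
    (β : ℝ) (hβ : 0 < β) :
    ∃ ηbar : Fin m → ℝ,
      ((∃ c : ℝ, ηbar = fun _ => c) ∧
        (∀ j, -(1 / β) * ((∑ i, g i (ηbar i)) - d) - L.mulVec ηbar j = 0)) ∧
      (∀ η' : Fin m → ℝ,
        ((∃ c : ℝ, η' = fun _ => c) ∧
          (∀ j, -(1 / β) * ((∑ i, g i (η' i)) - d) - L.mulVec η' j = 0)) → η' = ηbar) ∧
      (∃ 𝒱 : (Fin m → ℝ) → ℝ,
        ContDiff ℝ 1 𝒱 ∧
        𝒱 ηbar = 0 ∧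
        (∀ η : Fin m → ℝ, η ≠ ηbar → 0 < 𝒱 η) ∧
        Tendsto 𝒱 (Filter.comap (fun η : Fin m → ℝ => Real.sqrt (∑ i, (η i) ^ 2)) atTop)
          atTop ∧
        (∀ η : Fin m → ℝ, η ≠ ηbar →
          fderiv ℝ 𝒱 η (fun j => -(1 / β) * ((∑ i, g i (η i)) - d) - L.mulVec η j) < 0)) := by
  have hm0 : 0 < m := by omega
  have : Nonempty (Fin m) := ⟨⟨0, hm0⟩⟩
  -- properties of g
  have hgc : ∀ i p q, μ i * (g i p - g i q)^2 ≤ (p - q) * (g i p - g i q) := by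
    intro i p q
    have := hconv i (g i p) (g i q) (hg_mem i p).1 (hg_mem i p).2 (hg_mem i q).1 (hg_mem i q).2
    rwa [hg_right, hg_right] at this
  have hgs : ∀ i, StrictMono (g i) := by
    intro i p q hpq
    by_contra! hle
    have h1 := hgc i p q
    rcases hle.eq_or_lt with h | h
    · have := congrArg (J' i) h
      rw [hg_right, hg_right] at this
      linarith
    · have : 0 < μ i * (g i p - g i q)^2 := by
        have := hμ i
        have : 0 < g i p - g i q := by linarith
        positivity
      nlinarith
  have hgl : ∀ i p q, |g i p - g i q| ≤ (μ i)⁻¹ * |p - q| := by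
    intro i p q
    have h1 := hgc i p q
    have h2 : (p - q) * (g i p - g i q) ≤ |p - q| * |g i p - g i q| := by
      rw [← abs_mul]; exact le_abs_self _
    have h3 : μ i * (|g i p - g i q|)^2 ≤ |p - q| * |g i p - g i q| := by
      rw [sq_abs]; linarith
    rcases (abs_nonneg (g i p - g i q)).eq_or_lt with h | h
    · rw [← h]; have := hμ i; positivity
    · rw [inv_mul_eq_div, le_div_iff₀ (hμ i)]
      have : (|g i p - g i q| * μ i) * |g i p - g i q| ≤ |p - q| * |g i p - g i q| := by linarith
      exact le_of_mul_le_mul_right this h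
  have hgcont : ∀ i, Continuous (g i) := by
    intro i
    have : LipschitzWith (Real.toNNReal (μ i)⁻¹) (g i) := by
      apply LipschitzWith.of_dist_le_mul
      intro x y
      rw [Real.coe_toNNReal _ (inv_nonneg.2 (hμ i).le), Real.dist_eq, Real.dist_eq]
      exact hgl i x y
    exact this.continuous
  set h : ℝ → ℝ := fun s => ∑ i, g i s - d with hh
  have hcont : Continuous h := by
    simp only [hh]; fun_prop
  have hstrict : StrictMono h := by
    intro p q hpq
    simp only [hh]
    have := Finset.sum_lt_sum_of_nonempty (s := (Finset.univ : Finset (Fin m)))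
      Finset.univ_nonempty (fun i _ => hgs i hpq)
    linarith
  have hmono := hstrict.monotone
  -- limits
  have htop : ∀ i, Tendsto (fun p => (g i p : EReal)) atTop (nhds (hi i)) := by
    intro i
    rw [tendsto_order]
    refine ⟨fun a ha => ?_, fun a ha => Eventually.of_forall fun p => (hg_mem i p).2.trans ha⟩
    obtain ⟨x, hx1, hx2⟩ := EReal.lt_iff_exists_real_btwn.mp (max_lt ha (hlohi i))
    filter_upwards [eventually_ge_atTop (J' i x)] with p hp
    have h1 := (hgs i).monotone hp
    rw [hg_left i x ((le_max_right _ _).trans_lt hx1) hx2] at h1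
    exact ((le_max_left _ _).trans_lt hx1).trans_le (EReal.coe_le_coe_iff.2 h1)
  have hbot : ∀ i, Tendsto (fun p => (g i p : EReal)) atBot (nhds (lo i)) := by
    intro i
    rw [tendsto_order]
    refine ⟨fun a ha => Eventually.of_forall fun p => ha.trans (hg_mem i p).1, fun a ha => ?_⟩
    obtain ⟨x, hx1, hx2⟩ := EReal.lt_iff_exists_real_btwn.mp (lt_min ha (hlohi i))
    filter_upwards [eventually_le_atBot (J' i x)] with p hp
    have h1 := (hgs i).monotone hp
    rw [hg_left i x hx1 (hx2.trans_le (min_le_right _ _))] at h1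
    exact (EReal.coe_le_coe_iff.2 h1).trans_lt (hx2.trans_le (min_le_left _ _))
  obtain ⟨p1, hp1⟩ : ∃ p, 0 < h p := by
    have := (tendsto_sum_hi Finset.univ g hi atTop htop (fun i => (bot_le.trans_lt (hlohi i)).ne')).2
    obtain ⟨p, hp⟩ := (this.eventually (lt_mem_nhds hfeas_hi)).exists
    exact ⟨p, sub_pos.2 (EReal.coe_lt_coe_iff.1 hp)⟩
  obtain ⟨p0, hp0⟩ : ∃ p, h p < 0 := by
    have := (tendsto_sum_lo Finset.univ g lo atBot hbot (fun i => ((hlohi i).trans_le le_top).ne)).2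
    obtain ⟨p, hp⟩ := (this.eventually (gt_mem_nhds hfeas_lo)).exists
    exact ⟨p, sub_neg.2 (EReal.coe_lt_coe_iff.1 hp)⟩
  obtain ⟨s0, hs0⟩ : ∃ s, h s = 0 := by
    have := mem_range_of_exists_le_of_exists_ge hcont ⟨p0, hp0.le⟩ ⟨p1, hp1.le⟩
    exact this
  have hLc : ∀ c : ℝ, L *ᵥ (fun _ => c) = 0 := by
    intro c
    have : (fun _ : Fin m => c) = c • (fun _ => (1:ℝ)) := by ext; simp
    rw [this, Matrix.mulVec_smul, hL1, smul_zero]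
  obtain ⟨w, hw, hw1, k, U, c, hc, hU, hUc⟩ := consensus_lyap L hm0 hL1 hsimple hspec
  refine ⟨fun _ => s0, ⟨⟨s0, rfl⟩, ?_⟩, ?_, ?_⟩
  · intro j
    have : ∑ i, g i s0 - d = 0 := hs0
    rw [this, hLc]; simp
  · rintro _ ⟨⟨c', rfl⟩, hc'⟩
    have := hc' ⟨0, hm0⟩
    rw [hLc, Pi.zero_apply, sub_zero] at this
    have h1 : h c' = 0 := by
      rcases mul_eq_zero.1 this with h | h
      · have : 0 < 1/β := by positivity
        linarith
      · exact h
    have : c' = s0 := hstrict.injective (h1.trans hs0.symm)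
    rw [this]
  -- the functional and the projection
  let wl : (Fin m → ℝ) →L[ℝ] ℝ := LinearMap.toContinuousLinearMap
    (dotProductBilin ℝ ℝ w : (Fin m → ℝ) →ₗ[ℝ] ℝ)
  have hwl : ∀ x, wl x = w ⬝ᵥ x := fun x => rfl
  have hwl1 : ∀ a : ℝ, wl (fun _ => a) = a := by
    intro a; rw [hwl]; simp [dotProduct, ← Finset.sum_mul, hw1]
  have hwlL : ∀ x, wl (L *ᵥ x) = 0 := by
    intro x; rw [hwl, Matrix.dotProduct_mulVec, hw, zero_dotProduct]
  let P : (Fin m → ℝ) →ₗ[ℝ] (Fin m → ℝ) :=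
    LinearMap.id - (wl : (Fin m → ℝ) →ₗ[ℝ] ℝ).smulRight (fun _ => (1:ℝ))
  have hP : ∀ x, P x = fun i => x i - wl x := by
    intro x; ext i; simp [P]
  have hwP : ∀ x, w ⬝ᵥ P x = 0 := by
    intro x
    have : P x = x - fun _ => wl x := by rw [hP]; rfl
    rw [← hwl, this, map_sub, hwl1, sub_self]
  let UP : (Fin m → ℝ) →L[ℝ] (Fin k ⊕ Fin k → ℝ) := LinearMap.toContinuousLinearMap (U ∘ₗ P)
  have hUP : ∀ x, UP x = U (P x) := fun x => rfl
  set q : (Fin m → ℝ) → ℝ := fun x => ∑ i, (UP x i)^2 with hq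
  have hq0 : ∀ x, 0 ≤ q x := fun x => Finset.sum_nonneg fun i _ => sq_nonneg _
  obtain ⟨K, hK0, hK⟩ : ∃ K : ℝ, 0 < K ∧ ∀ x i, |x i - wl x| ≤ K * Real.sqrt (q x) := by
    obtain ⟨K, hK0, hK⟩ := LinearMap.exists_antilipschitzWith U (LinearMap.ker_eq_bot.2 hU)
    refine ⟨K, hK0, fun x i => ?_⟩
    have h1 := hK.le_mul_dist (P x) 0
    rw [map_zero, dist_zero_right, dist_zero_right] at h1
    have h2 := norm_le_pi_norm (P x) i
    rw [hP, Real.norm_eq_abs] at h2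
    rw [hP] at h1
    refine h2.trans (h1.trans ?_)
    apply mul_le_mul_of_nonneg_left _ K.2
    rw [pi_norm_le_iff_of_nonneg (Real.sqrt_nonneg _)]
    intro j
    rw [Real.norm_eq_abs]
    apply Real.abs_le_sqrt
    have := Finset.single_le_sum (f := fun j => (UP x j)^2) (fun j _ => sq_nonneg _) (Finset.mem_univ j)
    have e : UP x j = (U fun i => x i - wl x) j := by rw [hUP, hP]
    rw [← e]
    exact this
  have hqz : ∀ x, q x = 0 → wl x = s0 → x = fun _ => s0 := by
    intro x hx hx'
    ext i
    have := hK x i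
    rw [hx, Real.sqrt_zero, mul_zero, hx'] at this
    have := abs_nonpos_iff.1 this
    linarith
  -- Lipschitz perturbation constant
  obtain ⟨E, hE0, hE⟩ : ∃ E : ℝ, 0 ≤ E ∧ ∀ x, ((∑ i, g i (x i) - d) - h (wl x))^2 ≤ E * q x := by
    refine ⟨(∑ i, (μ i)⁻¹ * K)^2, sq_nonneg _, fun x => ?_⟩
    have h1 : |(∑ i, g i (x i) - d) - h (wl x)| ≤ (∑ i, (μ i)⁻¹ * K) * Real.sqrt (q x) := by
      have : (∑ i, g i (x i) - d) - h (wl x) = ∑ i, (g i (x i) - g i (wl x)) := by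
        rw [Finset.sum_sub_distrib]; simp only [hh]; ring
      rw [this, Finset.sum_mul]
      refine (Finset.abs_sum_le_sum_abs _ _).trans (Finset.sum_le_sum fun i _ => ?_)
      refine (hgl i _ _).trans ?_
      rw [mul_assoc]
      exact mul_le_mul_of_nonneg_left (hK x i) (inv_nonneg.2 (hμ i).le)
    have h2 := pow_le_pow_left₀ (abs_nonneg _) h1 2
    rwa [sq_abs, mul_pow, Real.sq_sqrt (hq0 x)] at h2
  set φ : ℝ → ℝ := fun s => ∫ x in s0..s, h x with hφ
  have hφd : ∀ s, HasDerivAt φ (h s) s := fun s => (hcont.integral_hasStrictDerivAt s0 s).hasDerivAt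
  have hφc : ContDiff ℝ 1 φ := by
    rw [contDiff_one_iff_deriv]
    refine ⟨fun s => (hφd s).differentiableAt, ?_⟩
    have : deriv φ = h := funext fun s => (hφd s).deriv
    rwa [this]
  have htan : ∀ s t, φ t + h t * (s - t) ≤ φ s := fun s t => prim_tangent h hcont hmono s0 s t
  have hφ00 : φ s0 = 0 := by simp [hφ]
  have hφ0 : ∀ s, 0 ≤ φ s := by
    intro s; have := htan s s0; rw [hs0, hφ00] at this; linarith
  have hφpos : ∀ s, s ≠ s0 → 0 < φ s := by
    intro s hs
    have h1 := htan s ((s + s0)/2)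
    have h2 := hφ0 ((s+s0)/2)
    have h3 : 0 < h ((s+s0)/2) * (s - (s+s0)/2) := by
      rcases lt_or_gt_of_ne hs with hlt | hlt
      · have : h ((s+s0)/2) < h s0 := hstrict (by linarith)
        exact mul_pos_of_neg_of_neg (by linarith) (by linarith)
      · have : h s0 < h ((s+s0)/2) := hstrict (by linarith)
        exact mul_pos (by linarith) (by linarith)
    linarith
  obtain ⟨κ, hκ, hφκ⟩ : ∃ κ : ℝ, 0 < κ ∧ ∀ s, κ * (|s - s0| - 1) ≤ φ s := by
    have a1 : 0 < h (s0 + 1) := by rw [← hs0]; exact hstrict (by linarith)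
    have a2 : h (s0 - 1) < 0 := by
      have := hstrict (show s0 - 1 < s0 by linarith); linarith
    refine ⟨min (h (s0+1)) (-h (s0-1)), lt_min a1 (by linarith), fun s => ?_⟩
    rcases le_total (|s - s0|) 1 with hle | hle
    · refine le_trans ?_ (hφ0 s)
      exact mul_nonpos_of_nonneg_of_nonpos (lt_min a1 (by linarith)).le (by linarith)
    · rcases le_total s0 s with hs | hs
      · rw [abs_of_nonneg (by linarith)] at hle ⊢
        have := mul_le_mul_of_nonneg_right (min_le_left (h (s0+1)) (-h (s0-1)))
          (show 0 ≤ s - s0 - 1 by linarith)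
        have h1 := htan s (s0+1)
        have h2 := hφ0 (s0+1)
        linarith
      · rw [abs_of_nonpos (by linarith)] at hle ⊢
        have := mul_le_mul_of_nonneg_right (min_le_right (h (s0+1)) (-h (s0-1)))
          (show 0 ≤ -(s - s0) - 1 by linarith)
        have h1 := htan s (s0-1)
        have h2 := hφ0 (s0-1)
        linarith
  set a : ℝ := E / (2 * β * c) + 1 with ha
  have ha0 : 0 < a := by positivity
  have hac : 2 * a * c = E / β + 2 * c := by
    rw [ha]; field_simp
  have hVpos : ∀ x, x ≠ (fun _ => s0) → 0 < φ (wl x) ∨ 0 < q x := by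
    intro x hx
    by_contra! hcon
    apply hx
    apply hqz x (le_antisymm hcon.2 (hq0 x))
    by_contra hne
    exact absurd (hφpos _ hne) (not_lt.2 hcon.1)
  refine ⟨fun x => φ (wl x) + a * q x, ?_, ?_, ?_, ?_, ?_⟩
  · apply ContDiff.add (hφc.comp wl.contDiff)
    apply contDiff_const.mul
    apply ContDiff.sum
    intro i _
    apply ContDiff.pow
    exact (contDiff_pi.1 UP.contDiff) i
  · have : q (fun _ => s0) = 0 := by
      have : P (fun _ => s0) = 0 := by rw [hP, hwl1]; ext; simp
      simp [hq, hUP, this]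
    simp only [hwl1, hφ00, this]; simp
  · intro x hx
    have h1 := hφ0 (wl x)
    have h2 := mul_nonneg ha0.le (hq0 x)
    rcases hVpos x hx with h3 | h3
    · show 0 < φ (wl x) + a * q x
      linarith
    · have := mul_pos ha0 h3
      show 0 < φ (wl x) + a * q x
      linarith
  · rw [tendsto_atTop]
    intro C
    set R : ℝ := K * Real.sqrt (C / a) + (C / κ + 1 + |s0|) with hR
    rw [eventually_comap]
    filter_upwards [eventually_gt_atTop (Real.sqrt (∑ i : Fin m, R^2))] with r hr x hx
    by_contra! hlt
    have h1 := hφ0 (wl x)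
    have h2 := mul_nonneg ha0.le (hq0 x)
    have h3 : q x ≤ C / a := by rw [le_div_iff₀ ha0]; linarith
    have h4 : |wl x - s0| ≤ C / κ + 1 := by
      have := hφκ (wl x)
      have : |wl x - s0| - 1 ≤ C / κ := by rw [le_div_iff₀ hκ]; linarith
      linarith
    have h5 : ∀ i, |x i| ≤ R := by
      intro i
      have b1 := hK x i
      have b2 := mul_le_mul_of_nonneg_left (Real.sqrt_le_sqrt h3) hK0.le
      have b3 : |x i| ≤ |x i - wl x| + |wl x - s0| + |s0| := by
        have : x i = (x i - wl x) + (wl x - s0) + s0 := by ring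
        calc |x i| = |(x i - wl x) + (wl x - s0) + s0| := by rw [← this]
          _ ≤ _ := abs_add_three _ _ _
      linarith
    have h6 : Real.sqrt (∑ i, (x i)^2) ≤ Real.sqrt (∑ i : Fin m, R^2) := by
      apply Real.sqrt_le_sqrt
      refine Finset.sum_le_sum fun i _ => ?_
      rw [← sq_abs]
      exact pow_le_pow_left₀ (abs_nonneg _) (h5 i) 2
    rw [hx] at h6
    linarith
  · intro x hx
    set v : Fin m → ℝ := fun j => -(1 / β) * ((∑ i, g i (x i)) - d) - L.mulVec x j with hv
    set G : ℝ := (∑ i, g i (x i)) - d with hG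
    have hvdec : v = (fun _ => -(1/β) * G) - L *ᵥ x := by ext j; simp [hv]
    have hwv : wl v = -(1/β) * G := by rw [hvdec, map_sub, hwl1, hwlL, sub_zero]
    have hPv : P v = - (L *ᵥ P x) := by
      have e1 : P x = x - fun _ => wl x := by rw [hP]; rfl
      rw [e1, Matrix.mulVec_sub, hLc, sub_zero, hP, hwv]
      ext j; simp [hv]; ring
    have hder : HasFDerivAt (fun x => φ (wl x) + a * q x)
        (h (wl x) • wl + a • ∑ i, (2 * UP x i) • ((ContinuousLinearMap.proj i).comp UP)) x := by
      apply HasFDerivAt.add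
      · exact (hφd (wl x)).comp_hasFDerivAt x wl.hasFDerivAt
      · apply HasFDerivAt.const_mul
        apply HasFDerivAt.fun_sum
        intro i _
        have := (((ContinuousLinearMap.proj (R := ℝ) (φ := fun _ : Fin k ⊕ Fin k => ℝ) i).comp UP).hasFDerivAt (x := x)).pow 2
        simpa using this
    rw [hder.fderiv]
    have hval : (h (wl x) • wl + a • ∑ i, (2 * UP x i) • ((ContinuousLinearMap.proj (R := ℝ) (φ := fun _ : Fin k ⊕ Fin k => ℝ) i).comp UP)) v
        = -(1/β) * (h (wl x) * G) - 2 * a * ∑ i, U (P x) i * U (L *ᵥ P x) i := by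
      simp only [_root_.add_apply, _root_.smul_apply,
        _root_.sum_apply, ContinuousLinearMap.comp_apply, ContinuousLinearMap.proj_apply,
        hwv, hUP, hPv, map_neg, smul_eq_mul]
      rw [Finset.mul_sum, Finset.mul_sum, sub_eq_add_neg, ← Finset.sum_neg_distrib]
      congr 1
      · ring
      · exact Finset.sum_congr rfl fun i _ => by ring
    rw [hval]
    have k1 : c * q x ≤ ∑ i, U (P x) i * U (L *ᵥ P x) i := hUc (P x) (hwP x)
    have k2 : 2 * a * (c * q x) ≤ 2 * a * ∑ i, U (P x) i * U (L *ᵥ P x) i :=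
      mul_le_mul_of_nonneg_left k1 (by positivity)
    have k3 : 2 * a * (c * q x) = E / β * q x + 2 * c * q x := by
      rw [← mul_assoc, hac]; ring
    have k4 := hE x
    set H := h (wl x) with hH
    have k5 : -(H * G) ≤ - H^2/2 + E * q x / 2 := by
      have := sq_nonneg (G : ℝ)
      nlinarith
    have k6 : -(1/β) * (H * G) ≤ (1/β) * (- H^2/2 + E * q x / 2) := by
      have := mul_le_mul_of_nonneg_left k5 (show 0 ≤ 1/β by positivity)
      linarith
    have k7 : E / β * q x = (1/β) * (E * q x) := by ring
    have k8 : 0 ≤ (1/β) * (E * q x) := by have := hq0 x; positivity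
    have k9 : 0 ≤ (1/β) * H^2 := by positivity
    have k10 : 0 ≤ 2 * c * q x := by have := hq0 x; positivity
    have k11 : 0 < (1/β) * H^2 ∨ 0 < 2 * c * q x := by
      rcases hVpos x hx with h3 | h3
      · left
        have : H ≠ 0 := by
          intro h0
          have : wl x = s0 := hstrict.injective (h0.trans hs0.symm)
          rw [this, hφ00] at h3
          exact lt_irrefl _ h3
        positivity
      · right; positivity
    have k12 : (1/β) * (- H^2/2 + E * q x / 2) = -((1/β) * H^2)/2 + ((1/β) * (E * q x))/2 := by ring
    rw [k12] at k6
    rw [k7] at k3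
    rcases k11 with k11 | k11 <;> linarith
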